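/- Let t ∈ ℝ, s > 0, λ > 0, and let f = aX³ + bX²Y + cXY² + dY³ be a binary cubic form with a ∈ ℤ, a ≠ 0, and b, c, d ∈ ℝ. If q(a(s)^{-1} · (n(t)^{-1} · f)) < λ², then s < (λ/2)^{1/3}. Here q(aX³ + bX²Y + cXY² + dY³) = 5a² + b² + c² + 5d² + 2ac + 2bd, n(t) is the matrix with rows (1, 0) and (t, 1), a(s) is the diagonal matrix with entries (s^{-1}, s), and GL_2(ℝ) acts on binary cubic forms by (M·f)(v) = det(M)^{-1} · f(Mᵀ v). -/

import Mathlib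

/-!
Completing squares, `q = 4a² + (a + c)² + (b + d)² + 4d²`, so `q < λ²` bounds the
`X³`-coefficient alone: twice its absolute value is less than `λ`. Passing from `f` to
`a(s)⁻¹ · (n(t)⁻¹ · f)` multiplies that coefficient by `s³`. A nonzero `X³`-coefficient of `f`
therefore bounds `s`, and integrality makes the bound uniform.
-/

/-- `IsCubicActOn M (a,b,c,d) (a',b',c',d')` says that the binary cubic form with
coefficients `(a',b',c',d')` equals `M·f` where `f` has coefficients `(a,b,c,d)`, under
the rule `(M·f)(v) = det(M)⁻¹ · f(Mᵀ v)`. -/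
def IsCubicActOn (M : Matrix (Fin 2) (Fin 2) ℝ) (a b c d a' b' c' d' : ℝ) : Prop :=
  ∀ x y : ℝ, a'*x^3 + b'*x^2*y + c'*x*y^2 + d'*y^3 =
    (M.det)⁻¹ * (a*(M 0 0*x + M 1 0*y)^3 + b*(M 0 0*x + M 1 0*y)^2*(M 0 1*x + M 1 1*y)
      + c*(M 0 0*x + M 1 0*y)*(M 0 1*x + M 1 1*y)^2 + d*(M 0 1*x + M 1 1*y)^3)

namespace IsCubicActOn

variable {a b c d a' b' c' d' : ℝ}

theorem leadingCoeff_eq {M : Matrix (Fin 2) (Fin 2) ℝ}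
    (h : IsCubicActOn M a b c d a' b' c' d') :
    a' = M.det⁻¹ *
      (a * M 0 0 ^ 3 + b * M 0 0 ^ 2 * M 0 1 + c * M 0 0 * M 0 1 ^ 2 + d * M 0 1 ^ 3) := by
  simpa using h 1 0

/-- If `u * v = 0`, both sides are `0` by the conventions for inverting singular matrices and
dividing by `0`. -/
theorem leadingCoeff_inv_lowerTriangular {u v w : ℝ}
    (h : IsCubicActOn (!![u, 0; w, v])⁻¹ a b c d a' b' c' d') :
    a' = v / u ^ 2 * a := by
  have h_corner : (!![u, 0; w, v])⁻¹ 0 0 = (u * v)⁻¹ * v := by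
    simp [Matrix.inv_def, Matrix.adjugate_fin_two, Matrix.det_fin_two]
  have h_upper : (!![u, 0; w, v])⁻¹ 0 1 = 0 := by
    simp [Matrix.inv_def, Matrix.adjugate_fin_two]
  have h_det : ((!![u, 0; w, v])⁻¹).det⁻¹ = u * v := by
    simp [Matrix.det_nonsing_inv, Matrix.det_fin_two]
  rw [h.leadingCoeff_eq, h_corner, h_upper, h_det]
  rcases eq_or_ne u 0 with rfl | hu
  · simp
  rcases eq_or_ne v 0 with rfl | hv
  · simp
  field_simp
  ring

theorem leadingCoeff_inv_lowerUnipotent {t : ℝ}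
    (h : IsCubicActOn (!![1, 0; t, 1])⁻¹ a b c d a' b' c' d') : a' = a := by
  simpa using h.leadingCoeff_inv_lowerTriangular

theorem leadingCoeff_inv_diagonal {s : ℝ}
    (h : IsCubicActOn (!![s⁻¹, 0; 0, s])⁻¹ a b c d a' b' c' d') : a' = s ^ 3 * a := by
  rw [h.leadingCoeff_inv_lowerTriangular, inv_pow, div_inv_eq_mul, ← pow_succ']

end IsCubicActOn

/-- The quadratic form `q` on binary cubic forms, as a function of the coefficients of
`aX³ + bX²Y + cXY² + dY³`. It measures the size of a form. -/
def cubicQuadForm {R : Type*} [CommRing R] (a b c d : R) : R :=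
  5 * a ^ 2 + b ^ 2 + c ^ 2 + 5 * d ^ 2 + 2 * a * c + 2 * b * d

section cubicQuadForm

variable {R : Type*} [CommRing R]

theorem cubicQuadForm_eq_sum_sq (a b c d : R) :
    cubicQuadForm a b c d = (2 * a) ^ 2 + (a + c) ^ 2 + (b + d) ^ 2 + (2 * d) ^ 2 := by
  unfold cubicQuadForm
  ring

variable [LinearOrder R] [IsStrictOrderedRing R]

theorem sq_two_mul_le_cubicQuadForm (a b c d : R) : (2 * a) ^ 2 ≤ cubicQuadForm a b c d := by
  rw [cubicQuadForm_eq_sum_sq, add_assoc, add_assoc]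
  exact le_add_of_nonneg_right (by positivity)

theorem two_mul_abs_lt_of_cubicQuadForm_lt_sq {a b c d r : R} (hr : 0 ≤ r)
    (h : cubicQuadForm a b c d < r ^ 2) : 2 * |a| < r := by
  have h_sq : (2 * a) ^ 2 < r ^ 2 := (sq_two_mul_le_cubicQuadForm a b c d).trans_lt h
  simpa only [abs_mul, abs_two] using abs_lt_of_sq_lt_sq h_sq hr

end cubicQuadForm

theorem stmt13_general {t s lam : ℝ} (hs : 0 < s) (hlam : 0 < lam) {a : ℝ} (ha : a ≠ 0)
    {b c d a₁ b₁ c₁ d₁ a₂ b₂ c₂ d₂ : ℝ}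
    (h1 : IsCubicActOn (!![1, 0; t, 1])⁻¹ a b c d a₁ b₁ c₁ d₁)
    (h2 : IsCubicActOn (!![s⁻¹, 0; 0, s])⁻¹ a₁ b₁ c₁ d₁ a₂ b₂ c₂ d₂)
    (hq : cubicQuadForm a₂ b₂ c₂ d₂ < lam ^ 2) :
    s < (lam / (2 * |a|)) ^ ((1 : ℝ) / 3) := by
  have h_coeff : |a₂| = s ^ 3 * |a| := by
    rw [h2.leadingCoeff_inv_diagonal, h1.leadingCoeff_inv_lowerUnipotent, abs_mul,
      abs_of_pos (pow_pos hs 3)]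
  have h_cube : s ^ 3 < lam / (2 * |a|) := by
    rw [lt_div_iff₀ (by positivity), mul_left_comm, ← h_coeff]
    exact two_mul_abs_lt_of_cubicQuadForm_lt_sq hlam.le hq
  rw [one_div, Real.lt_rpow_inv_iff_of_pos hs.le (by positivity) three_pos]
  exact_mod_cast h_cube

/-- Let `t ∈ ℝ`, `s > 0`, `λ > 0`, and let `f = aX³+bX²Y+cXY²+dY³` be a
binary cubic form with `a ∈ ℤ`, `a ≠ 0`, and `b, c, d ∈ ℝ`. If
`q(a(s)⁻¹·(n(t)⁻¹·f)) < λ²` then `s < (λ/2)^(1/3)`. Here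
`q(aX³+bX²Y+cXY²+dY³) = 5a²+b²+c²+5d²+2ac+2bd`, `n(t) = [[1,0],[t,1]]` and
`a(s) = diag(s⁻¹, s)`. -/
theorem stmt13 (t s lam : ℝ) (hs : 0 < s) (hlam : 0 < lam)
    (aInt : ℤ) (ha : aInt ≠ 0) (b c d : ℝ)
    (a₁ b₁ c₁ d₁ a₂ b₂ c₂ d₂ : ℝ)
    (h1 : IsCubicActOn (!![1, 0; t, 1])⁻¹ (aInt : ℝ) b c d a₁ b₁ c₁ d₁)
    (h2 : IsCubicActOn (!![s⁻¹, 0; 0, s])⁻¹ a₁ b₁ c₁ d₁ a₂ b₂ c₂ d₂)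
    (hq : 5*a₂^2 + b₂^2 + c₂^2 + 5*d₂^2 + 2*a₂*c₂ + 2*b₂*d₂ < lam^2) :
    s < (lam / 2) ^ ((1 : ℝ) / 3) := by
  have h_abs : (1 : ℝ) ≤ |(aInt : ℝ)| := mod_cast Int.one_le_abs ha
  exact (stmt13_general hs hlam (mod_cast ha) h1 h2 hq).trans_le (by gcongr; linarith)
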